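/- arXiv:2209.11149 — 3 statements merged into one kernel-verified Lean document; each statement's English description precedes it below -/
import Mathlib

section
/- Let n ≥ 1 and let σ ∈ Matrix (Fin n) (Fin n) ℂ be positive definite. For A, B ∈ Matrix (Fin n) (Fin n) ℂ define ⟨A,B⟩_BKM := Tr[A* · ∫₀¹ σ^{1−s} B σ^{s} ds] and ⟨A,B⟩_BKM~ := Tr[A* · ∫₀^∞ (t·I+σ)⁻¹ B (t·I+σ)⁻¹ dt]. Let K : Matrix (Fin n) (Fin n) ℂ → Matrix (Fin n) (Fin n) ℂ be a linear map and let K† be its adjoint with respect to the Hilbert–Schmidt pairing, i.e. Tr[(K†A)* B] = Tr[A* (K B)] for all A, B. Then the following are equivalent: (1) ⟨K A, B⟩_BKM = ⟨A, K B⟩_BKM for all A, B; (2) ⟨K† A, B⟩_BKM~ = ⟨A, K† B⟩_BKM~ for all A, B; (3) M_σ ∘ K = K† ∘ M_σ, where M_σ(A) := ∫₀¹ σ^{1−s} A σ^{s} ds. -/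
open scoped ComplexOrder Matrix

/-- Real power `σ^r` of a positive definite (Hermitian) matrix, defined by applying the
real power to the eigenvalues in a spectral decomposition. -/
noncomputable def mpow {n : ℕ} (σ : Matrix (Fin n) (Fin n) ℂ) (r : ℝ) :
    Matrix (Fin n) (Fin n) ℂ :=
  if h : σ.IsHermitian then
    (h.eigenvectorUnitary : Matrix (Fin n) (Fin n) ℂ) *
      Matrix.diagonal (fun i => ((h.eigenvalues i ^ r : ℝ) : ℂ)) *
      (h.eigenvectorUnitary : Matrix (Fin n) (Fin n) ℂ)ᴴ
  else 0

/-- The Bogoliubov–Kubo–Mori multiplication operator `M_σ(A) := ∫₀¹ σ^{1−s} A σ^s ds`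
(entrywise Bochner integral). -/
noncomputable def bkmMul {n : ℕ} (σ A : Matrix (Fin n) (Fin n) ℂ) :
    Matrix (Fin n) (Fin n) ℂ :=
  Matrix.of fun i j => ∫ s in (0:ℝ)..1, (mpow σ (1 - s) * A * mpow σ s) i j

/-- The operator `M̃_σ(B) := ∫₀^∞ (t·I + σ)⁻¹ B (t·I + σ)⁻¹ dt`
(entrywise improper Bochner integral). -/
noncomputable def bkmInv {n : ℕ} (σ B : Matrix (Fin n) (Fin n) ℂ) :
    Matrix (Fin n) (Fin n) ℂ :=
  Matrix.of fun i j => ∫ t in Set.Ioi (0:ℝ),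
    (((t : ℂ) • (1 : Matrix (Fin n) (Fin n) ℂ) + σ)⁻¹ * B * ((t : ℂ) • 1 + σ)⁻¹) i j

/-!
For any operator `M` on matrices, nondegeneracy of the Hilbert–Schmidt pairing turns
self-adjointness of `K` for `Tr[Aᴴ M(B)]` into the intertwining relation `M ∘ K = K† ∘ M`. As
`(K†)† = K`, it remains to see that `M_σ` and `M̃_σ` are mutually inverse. In an eigenbasis of `σ`
with eigenvalues `λ`, both multiply matrices entrywise: `M_σ` by the logarithmic mean
`∫₀¹ λₖ^(1-s) λₗ^s ds` of `λₖ` and `λₗ`, and `M̃_σ` by its inverse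
`∫₀^∞ (t + λₖ)⁻¹ (t + λₗ)⁻¹ dt`.
-/

open Filter Matrix MeasureTheory Set Topology Unitary

section HilbertSchmidt

variable {m n R : Type*} [Fintype m] [Fintype n] [NonAssocSemiring R] [StarRing R]

theorem eq_of_forall_trace_conjTranspose_mul_eq {X Y : Matrix m n R}
    (h : ∀ A : Matrix m n R, (Aᴴ * X).trace = (Aᴴ * Y).trace) : X = Y :=
  ext_iff_trace_mul_left.2 fun A ↦ by simpa only [conjTranspose_conjTranspose] using h Aᴴ

theorem star_trace_conjTranspose_mul (A B : Matrix m n R) :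
    star (Aᴴ * B).trace = (Bᴴ * A).trace := by
  rw [← trace_conjTranspose, conjTranspose_mul, conjTranspose_conjTranspose]

variable {K Kd : Matrix m n R → Matrix m n R}

theorem hilbertSchmidt_adjoint_symm
    (hKd : ∀ A B, ((Kd A)ᴴ * B).trace = (Aᴴ * K B).trace) (A B : Matrix m n R) :
    ((K A)ᴴ * B).trace = (Aᴴ * Kd B).trace := by
  rw [← star_trace_conjTranspose_mul, ← hKd, star_trace_conjTranspose_mul]

theorem hilbertSchmidt_selfAdjoint_iff_semiconj
    (hKd : ∀ A B, ((Kd A)ᴴ * B).trace = (Aᴴ * K B).trace) (M : Matrix m n R → Matrix m n R) :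
    (∀ A B, ((K A)ᴴ * M B).trace = (Aᴴ * M (K B)).trace) ↔ Function.Semiconj M K Kd := by
  simp only [hilbertSchmidt_adjoint_symm hKd]
  exact ⟨fun h B ↦ eq_of_forall_trace_conjTranspose_mul_eq fun A ↦ (h A B).symm,
    fun h A B ↦ by rw [h B]⟩

end HilbertSchmidt

section SchurMultiplier

variable {m R : Type*} [Fintype m] [DecidableEq m] [CommRing R] [StarRing R]

/-- The Schur multiplier with symbol `C` in the orthonormal basis formed by the columns of `U`:
it multiplies the entries of `A` in that basis by those of `C`. It diagonalizes `M_σ` and `M̃_σ`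
simultaneously when `U` diagonalizes `σ`. -/
def schurMultiplier (U : unitaryGroup m R) (C A : Matrix m m R) : Matrix m m R :=
  conjStarAlgAut R _ U (C ⊙ (conjStarAlgAut R _ U).symm A)

theorem schurMultiplier_apply (U : unitaryGroup m R) (C A : Matrix m m R) (i j : m) :
    schurMultiplier U C A i j =
      ∑ l, ∑ k, C k l * (U.1 i k * (conjStarAlgAut R _ U).symm A k l * star (U.1 j l)) := by
  simp only [schurMultiplier, conjStarAlgAut_apply U (_ ⊙ _), mul_apply (N := star U.1),
    mul_apply (M := U.1), hadamard_apply, star_apply, Finset.sum_mul, mul_assoc, mul_left_comm]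

theorem schurMultiplier_leftInverse (U : unitaryGroup m R) {C D : Matrix m m R}
    (hCD : C ⊙ D = of 1) :
    Function.LeftInverse (schurMultiplier U C) (schurMultiplier U D) := fun A ↦ by
  simp only [schurMultiplier, StarAlgEquiv.symm_apply_apply, ← hadamard_assoc, hCD,
    of_one_hadamard, StarAlgEquiv.apply_symm_apply]

theorem conjStarAlgAut_diagonal_mul_mul_diagonal (U : unitaryGroup m R) (d e : m → R)
    (A : Matrix m m R) :
    conjStarAlgAut R _ U (diagonal d) * A * conjStarAlgAut R _ U (diagonal e) =
      schurMultiplier U (vecMulVec d e) A := by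
  have diagonal_mul_mul (X : Matrix m m R) :
      diagonal d * X * diagonal e = vecMulVec d e ⊙ X := by
    ext k l
    rw [mul_diagonal, diagonal_mul, hadamard_apply, vecMulVec_apply, mul_right_comm]
  rw [schurMultiplier, ← diagonal_mul_mul, map_mul, map_mul, StarAlgEquiv.apply_symm_apply]

theorem integral_schurMultiplier_apply {α 𝕜 : Type*} [MeasurableSpace α] {μ : Measure α}
    [RCLike 𝕜] (U : unitaryGroup m 𝕜) {C : α → Matrix m m 𝕜}
    (hC : ∀ k l, Integrable (fun s ↦ C s k l) μ) (A : Matrix m m 𝕜) (i j : m) :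
    ∫ s, schurMultiplier U (C s) A i j ∂μ =
      schurMultiplier U (of fun k l ↦ ∫ s, C s k l ∂μ) A i j := by
  simp only [schurMultiplier_apply, of_apply]
  rw [integral_finsetSum _ fun l _ ↦ integrable_finsetSum _ fun k _ ↦ (hC k l).mul_const _]
  refine Finset.sum_congr rfl fun l _ ↦ ?_
  rw [integral_finsetSum _ fun k _ ↦ (hC k l).mul_const _]
  exact Finset.sum_congr rfl fun k _ ↦ integral_mul_const _ _

theorem integral_conjStarAlgAut_diagonal_mul_mul_diagonal {α 𝕜 : Type*} [MeasurableSpace α]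
    {μ : Measure α} [RCLike 𝕜] (U : unitaryGroup m 𝕜) {d e : α → m → ℝ}
    (hde : ∀ k l, Integrable (fun s ↦ d s k * e s l) μ) (A : Matrix m m 𝕜) (i j : m) :
    ∫ s, (conjStarAlgAut 𝕜 _ U (diagonal fun k ↦ (d s k : 𝕜)) * A *
        conjStarAlgAut 𝕜 _ U (diagonal fun k ↦ (e s k : 𝕜))) i j ∂μ =
      schurMultiplier U (of fun k l ↦ ((∫ s, d s k * e s l ∂μ : ℝ) : 𝕜)) A i j := by
  simp only [conjStarAlgAut_diagonal_mul_mul_diagonal]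
  rw [integral_schurMultiplier_apply]
  · simp only [vecMulVec_apply, ← RCLike.ofReal_mul, integral_ofReal]
  · intro k l
    simpa only [vecMulVec_apply, RCLike.ofReal_mul] using (hde k l).ofReal (𝕜 := 𝕜)

end SchurMultiplier

section LogMean

/-- The logarithmic mean of two positive real numbers, extended to the diagonal by continuity. -/
noncomputable def logMean (a b : ℝ) : ℝ :=
  if a = b then a else (b - a) / (Real.log b - Real.log a)

variable {a b : ℝ}

theorem log_sub_log_ne_zero (ha : 0 < a) (hb : 0 < b) (hab : a ≠ b) :
    Real.log b - Real.log a ≠ 0 :=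
  sub_ne_zero.2 fun h ↦ hab (Real.log_injOn_pos ha hb h.symm)

theorem logMean_ne_zero (ha : 0 < a) (hb : 0 < b) : logMean a b ≠ 0 := by
  rw [logMean]
  split_ifs with hab
  · exact ha.ne'
  · exact div_ne_zero (sub_ne_zero.2 (Ne.symm hab)) (log_sub_log_ne_zero ha hb hab)

theorem continuous_rpow_one_sub_mul_rpow (ha : 0 < a) (hb : 0 < b) :
    Continuous fun s : ℝ ↦ a ^ (1 - s) * b ^ s := by
  fun_prop (disch := positivity)

theorem integral_rpow_one_sub_mul_rpow (ha : 0 < a) (hb : 0 < b) :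
    ∫ s in (0 : ℝ)..1, a ^ (1 - s) * b ^ s = logMean a b := by
  have eq_exp (s : ℝ) :
      a ^ (1 - s) * b ^ s = a * Real.exp ((Real.log b - Real.log a) * s) := by
    rw [Real.rpow_sub ha, Real.rpow_one, Real.rpow_def_of_pos ha, Real.rpow_def_of_pos hb,
      sub_mul, Real.exp_sub]
    ring
  simp only [eq_exp, intervalIntegral.integral_const_mul, logMean]
  split_ifs with hab
  · simp [hab]
  · rw [intervalIntegral.integral_comp_mul_left _ (log_sub_log_ne_zero ha hb hab), integral_exp,
      mul_one, mul_zero, Real.exp_sub, Real.exp_log ha, Real.exp_log hb, Real.exp_zero, smul_eq_mul]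
    field_simp

theorem integrableOn_inv_add_mul_inv_add (ha : 0 < a) (hb : 0 < b) :
    IntegrableOn (fun t ↦ (t + a)⁻¹ * (t + b)⁻¹) (Ioi 0) := by
  have inv_sq_integrable {c : ℝ} (hc : 0 < c) :
      IntegrableOn (fun t ↦ (t + c) ^ (-2 : ℝ)) (Ioi 0) :=
    integrableOn_add_rpow_Ioi_of_lt (by norm_num) (by linarith)
  refine ((inv_sq_integrable ha).add (inv_sq_integrable hb)).mono' (by fun_prop) ?_
  filter_upwards [ae_restrict_mem measurableSet_Ioi] with t (ht : 0 < t)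
  rw [Real.norm_of_nonneg (by positivity), Pi.add_apply, Real.rpow_neg (by positivity),
    Real.rpow_neg (by positivity), Real.rpow_two, Real.rpow_two, ← inv_pow, ← inv_pow]
  have inv_mul_inv_nonneg : 0 ≤ (t + a)⁻¹ * (t + b)⁻¹ := by positivity
  linarith [two_mul_le_add_sq (t + a)⁻¹ (t + b)⁻¹]

theorem integral_Ioi_inv_add_mul_inv_add_self (ha : 0 < a) :
    ∫ t in Ioi 0, (t + a)⁻¹ * (t + a)⁻¹ = a⁻¹ := by
  have hderiv : ∀ t ∈ Ici (0 : ℝ),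
      HasDerivAt (fun t ↦ -(t + a)⁻¹) ((t + a)⁻¹ * (t + a)⁻¹) t := by
    intro t (ht : 0 ≤ t)
    have hta : t + a ≠ 0 := by positivity
    refine (((hasDerivAt_id t).add_const a).fun_inv hta).fun_neg.congr_deriv ?_
    simp only [id]
    field_simp
  have hlim : Tendsto (fun t ↦ -(t + a)⁻¹) atTop (𝓝 0) := by
    simpa only [neg_zero] using!
      (tendsto_atTop_add_const_right _ a tendsto_id).inv_tendsto_atTop.neg
  rw [integral_Ioi_of_hasDerivAt_of_tendsto' hderiv (integrableOn_inv_add_mul_inv_add ha ha) hlim,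
    zero_add, zero_sub, neg_neg]

theorem integral_Ioi_inv_add_mul_inv_add_of_ne (ha : 0 < a) (hb : 0 < b) (hab : a ≠ b) :
    ∫ t in Ioi 0, (t + a)⁻¹ * (t + b)⁻¹ = (Real.log b - Real.log a) / (b - a) := by
  have hba : b - a ≠ 0 := sub_ne_zero.2 hab.symm
  have hderiv : ∀ t ∈ Ici (0 : ℝ),
      HasDerivAt (fun t ↦ (Real.log (t + a) - Real.log (t + b)) / (b - a))
        ((t + a)⁻¹ * (t + b)⁻¹) t := by
    intro t (ht : 0 ≤ t)
    have hta : t + a ≠ 0 := by positivity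
    have htb : t + b ≠ 0 := by positivity
    refine ((((hasDerivAt_id t).add_const a).log hta).sub
      (((hasDerivAt_id t).add_const b).log htb)).div_const (b - a) |>.congr_deriv ?_
    simp only [id]
    field_simp
    ring
  have hlim : Tendsto (fun t ↦ (Real.log (t + a) - Real.log (t + b)) / (b - a)) atTop (𝓝 0) := by
    simpa only [sub_sub_sub_cancel_right, sub_zero, zero_div] using
      ((Real.tendsto_log_comp_add_sub_log a).sub
        (Real.tendsto_log_comp_add_sub_log b)).div_const (b - a)
  rw [integral_Ioi_of_hasDerivAt_of_tendsto' hderiv (integrableOn_inv_add_mul_inv_add ha hb) hlim,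
    zero_add, zero_add, zero_sub, ← neg_div, neg_sub]

theorem integral_Ioi_inv_add_mul_inv_add (ha : 0 < a) (hb : 0 < b) :
    ∫ t in Ioi 0, (t + a)⁻¹ * (t + b)⁻¹ = (logMean a b)⁻¹ := by
  rw [logMean]
  split_ifs with hab
  · rw [← hab, integral_Ioi_inv_add_mul_inv_add_self ha]
  · rw [integral_Ioi_inv_add_mul_inv_add_of_ne ha hb hab, inv_div]

end LogMean

theorem inv_smul_one_add_eq_conjStarAlgAut {m 𝕜 : Type*} [Fintype m] [DecidableEq m] [RCLike 𝕜]
    {σ : Matrix m m 𝕜} (hσ : σ.IsHermitian) {t : 𝕜} (ht : ∀ k, t + hσ.eigenvalues k ≠ 0) :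
    (t • (1 : Matrix m m 𝕜) + σ)⁻¹ =
      conjStarAlgAut 𝕜 _ hσ.eigenvectorUnitary
        (diagonal fun k ↦ (t + (hσ.eigenvalues k : 𝕜))⁻¹) := by
  have spectral : t • (1 : Matrix m m 𝕜) + σ = conjStarAlgAut 𝕜 _ hσ.eigenvectorUnitary
      (diagonal fun k ↦ t + (hσ.eigenvalues k : 𝕜)) := by
    conv_lhs => rw [hσ.spectral_theorem,
      ← map_one (conjStarAlgAut 𝕜 (Matrix m m 𝕜) hσ.eigenvectorUnitary), ← map_smul, ← map_add,
      smul_one_eq_diagonal, diagonal_add]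
    rfl
  refine inv_eq_left_inv ?_
  rw [spectral, ← map_mul, diagonal_mul_diagonal]
  simp only [inv_mul_cancel₀ (ht _), diagonal_one, map_one]

section BKM

variable {n : ℕ} {σ : Matrix (Fin n) (Fin n) ℂ}

theorem mpow_eq_conjStarAlgAut (hσ : σ.IsHermitian) (r : ℝ) :
    mpow σ r = conjStarAlgAut ℂ _ hσ.eigenvectorUnitary
      (diagonal fun k ↦ ((hσ.eigenvalues k ^ r : ℝ) : ℂ)) :=
  dif_pos hσ

theorem bkmMul_eq_schurMultiplier (hσ : σ.PosDef) :
    bkmMul σ = schurMultiplier hσ.isHermitian.eigenvectorUnitary (of fun k l ↦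
      (logMean (hσ.isHermitian.eigenvalues k) (hσ.isHermitian.eigenvalues l) : ℂ)) := by
  ext A i j
  simp only [bkmMul, of_apply, mpow_eq_conjStarAlgAut hσ.isHermitian,
    intervalIntegral.integral_of_le zero_le_one]
  refine (integral_conjStarAlgAut_diagonal_mul_mul_diagonal _ (fun k l ↦
    ((continuous_rpow_one_sub_mul_rpow (hσ.eigenvalues_pos k)
      (hσ.eigenvalues_pos l)).intervalIntegrable 0 1).1) A i j).trans ?_
  simp only [← intervalIntegral.integral_of_le (zero_le_one' ℝ),
    integral_rpow_one_sub_mul_rpow (hσ.eigenvalues_pos _) (hσ.eigenvalues_pos _)]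
  rfl

theorem bkmInv_eq_schurMultiplier (hσ : σ.PosDef) :
    bkmInv σ = schurMultiplier hσ.isHermitian.eigenvectorUnitary (of fun k l ↦
      ((logMean (hσ.isHermitian.eigenvalues k) (hσ.isHermitian.eigenvalues l))⁻¹ : ℂ)) := by
  ext A i j
  have resolvent {t : ℝ} (ht : 0 < t) :
      ((t : ℂ) • (1 : Matrix (Fin n) (Fin n) ℂ) + σ)⁻¹ =
        conjStarAlgAut ℂ _ hσ.isHermitian.eigenvectorUnitary
          (diagonal fun k ↦ (((t + hσ.isHermitian.eigenvalues k)⁻¹ : ℝ) : ℂ)) := by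
    have ne_zero (k) : (t : ℂ) + (hσ.isHermitian.eigenvalues k : ℂ) ≠ 0 :=
      mod_cast (add_pos ht (hσ.eigenvalues_pos k)).ne'
    push_cast
    exact inv_smul_one_add_eq_conjStarAlgAut hσ.isHermitian ne_zero
  rw [bkmInv, of_apply, setIntegral_congr_fun measurableSet_Ioi fun t (ht : 0 < t) ↦
    congrArg (fun S ↦ (S * A * S) i j) (resolvent ht)]
  refine (integral_conjStarAlgAut_diagonal_mul_mul_diagonal _ (fun k l ↦
    integrableOn_inv_add_mul_inv_add (hσ.eigenvalues_pos k) (hσ.eigenvalues_pos l)) A i j).trans ?_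
  simp only [integral_Ioi_inv_add_mul_inv_add (hσ.eigenvalues_pos _) (hσ.eigenvalues_pos _),
    RCLike.ofReal_inv]
  rfl

theorem bkmMul_leftInverse_bkmInv (hσ : σ.PosDef) :
    Function.LeftInverse (bkmMul σ) (bkmInv σ) := by
  rw [bkmMul_eq_schurMultiplier hσ, bkmInv_eq_schurMultiplier hσ]
  refine schurMultiplier_leftInverse _ (Matrix.ext fun k l ↦ mul_inv_cancel₀ ?_)
  exact Complex.ofReal_ne_zero.2 (logMean_ne_zero (hσ.eigenvalues_pos k) (hσ.eigenvalues_pos l))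

theorem bkmInv_leftInverse_bkmMul (hσ : σ.PosDef) :
    Function.LeftInverse (bkmInv σ) (bkmMul σ) := by
  rw [bkmMul_eq_schurMultiplier hσ, bkmInv_eq_schurMultiplier hσ]
  refine schurMultiplier_leftInverse _ (Matrix.ext fun k l ↦ inv_mul_cancel₀ ?_)
  exact Complex.ofReal_ne_zero.2 (logMean_ne_zero (hσ.eigenvalues_pos k) (hσ.eigenvalues_pos l))

end BKM

/-- **Equivalence of BKM selfadjointness conditions.**
For `σ` positive definite, a linear map `K` with Hilbert–Schmidt adjoint `K†`, the
following are equivalent: (1) `K` is selfadjoint for `⟨A,B⟩_BKM = Tr[Aᴴ M_σ(B)]`;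
(2) `K†` is selfadjoint for `⟨A,B⟩_BKM~ = Tr[Aᴴ M̃_σ(B)]`; (3) `M_σ ∘ K = K† ∘ M_σ`. -/
theorem bkm_selfadjoint_equiv
    (n : ℕ) (hn : 1 ≤ n) (σ : Matrix (Fin n) (Fin n) ℂ) (hσ : σ.PosDef)
    (K Kd : Matrix (Fin n) (Fin n) ℂ →ₗ[ℂ] Matrix (Fin n) (Fin n) ℂ)
    (hKd : ∀ A B : Matrix (Fin n) (Fin n) ℂ, ((Kd A)ᴴ * B).trace = (Aᴴ * K B).trace) :
    ((∀ A B : Matrix (Fin n) (Fin n) ℂ,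
        ((K A)ᴴ * bkmMul σ B).trace = (Aᴴ * bkmMul σ (K B)).trace) ↔
      (∀ A B : Matrix (Fin n) (Fin n) ℂ,
        ((Kd A)ᴴ * bkmInv σ B).trace = (Aᴴ * bkmInv σ (Kd B)).trace)) ∧
    ((∀ A B : Matrix (Fin n) (Fin n) ℂ,
        ((K A)ᴴ * bkmMul σ B).trace = (Aᴴ * bkmMul σ (K B)).trace) ↔
      (∀ A : Matrix (Fin n) (Fin n) ℂ, bkmMul σ (K A) = Kd (bkmMul σ A))) := by
  have selfAdjoint_mul := hilbertSchmidt_selfAdjoint_iff_semiconj hKd (bkmMul σ)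
  have selfAdjoint_inv :=
    hilbertSchmidt_selfAdjoint_iff_semiconj (hilbertSchmidt_adjoint_symm hKd) (bkmInv σ)
  have semiconj_iff :
      Function.Semiconj (bkmMul σ) K Kd ↔ Function.Semiconj (bkmInv σ) Kd K :=
    ⟨fun h ↦ h.inverse_left (bkmInv_leftInverse_bkmMul hσ) (bkmMul_leftInverse_bkmInv hσ),
      fun h ↦ h.inverse_left (bkmMul_leftInverse_bkmInv hσ) (bkmInv_leftInverse_bkmMul hσ)⟩
  exact ⟨selfAdjoint_mul.trans (semiconj_iff.trans selfAdjoint_inv.symm), selfAdjoint_mul⟩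
end

section
/- Let n ≥ 1, let ρ ∈ Matrix (Fin n) (Fin n) ℂ be positive definite, and let A ∈ Matrix (Fin n) (Fin n) ℂ be Hermitian. Then the map ε ↦ log(ρ + ε·A) (matrix logarithm defined by functional calculus on positive definite matrices, defined for all sufficiently small real ε) is differentiable at ε = 0 with derivative ∫₀^∞ (t·I + ρ)⁻¹ · A · (t·I + ρ)⁻¹ dt, a convergent improper Bochner integral. -/
open scoped ComplexOrder Matrix

/-- Matrix logarithm of a positive definite (Hermitian) matrix, defined by applying the
real logarithm to the eigenvalues in a spectral decomposition. -/
noncomputable def mlog {n : ℕ} (ρ : Matrix (Fin n) (Fin n) ℂ) :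
    Matrix (Fin n) (Fin n) ℂ :=
  if h : ρ.IsHermitian then
    (h.eigenvectorUnitary : Matrix (Fin n) (Fin n) ℂ) *
      Matrix.diagonal (fun i => ((Real.log (h.eigenvalues i) : ℝ) : ℂ)) *
      (h.eigenvectorUnitary : Matrix (Fin n) (Fin n) ℂ)ᴴ
  else 0

/-!
The scalar identity `log x = ∫₀^∞ ((t + 1)⁻¹ - (t + x)⁻¹) dt` passes through the continuous
functional calculus, so `log b - log a = ∫₀^∞ ((t + a)⁻¹ - (t + b)⁻¹) dt` for positive `a`, `b`.
By the resolvent identity the integrand is `(t + a)⁻¹ h (t + b)⁻¹` with `h = b - a`. Replacing the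
last factor by `(t + a)⁻¹` costs, by the same identity, `(t + a)⁻¹ h (t + a)⁻¹ h (t + b)⁻¹`, whose
norm is at most `‖h‖² (t + c)⁻³` when the spectra lie above `c > 0`. This is integrable in `t`, so
the linear term is the derivative, with an error of order `‖h‖²`.
-/

open MeasureTheory Set Filter Topology

section ScalarIntegral

variable {c x t : ℝ}

lemma integrableOn_inv_add_pow (hc : 0 < c) {k : ℕ} (hk : 2 ≤ k) :
    IntegrableOn (fun t : ℝ ↦ (t + c)⁻¹ ^ k) (Ioi 0) := by
  have hk' : (-k : ℝ) < -1 := neg_lt_neg (by exact_mod_cast hk)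
  refine (integrableOn_add_rpow_Ioi_of_lt hk' (neg_lt_zero.2 hc)).congr_fun
    (fun t (ht : 0 < t) ↦ ?_) measurableSet_Ioi
  beta_reduce
  rw [Real.rpow_neg (by positivity), Real.rpow_natCast, inv_pow]

lemma abs_inv_add_one_sub_inv_add_le (hc1 : c ≤ 1) (hcx : c ≤ x) (ht : -c < t) :
    |(t + 1)⁻¹ - (t + x)⁻¹| ≤ |x - 1| * (t + c)⁻¹ ^ 2 := by
  have hc : 0 < t + c := by linarith
  have hx : 0 < t + x := by linarith
  have h1 : 0 < t + 1 := by linarith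
  calc |(t + 1)⁻¹ - (t + x)⁻¹|
      = |x - 1| * ((t + 1)⁻¹ * (t + x)⁻¹) := by
        rw [inv_sub_inv h1.ne' hx.ne', add_sub_add_left_eq_sub, div_eq_mul_inv, mul_inv, abs_mul,
          abs_of_pos (mul_pos (inv_pos.2 h1) (inv_pos.2 hx))]
    _ ≤ |x - 1| * ((t + c)⁻¹ * (t + c)⁻¹) := by gcongr
    _ = |x - 1| * (t + c)⁻¹ ^ 2 := by rw [sq]

lemma continuousOn_uncurry_inv_add_one_sub_inv_add {s : Set ℝ} (hs : s ⊆ Ioi 0) :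
    ContinuousOn (Function.uncurry fun t x : ℝ ↦ (t + 1)⁻¹ - (t + x)⁻¹) (Ioi 0 ×ˢ s) := by
  refine ContinuousOn.sub (.inv₀ (by fun_prop) ?_) (.inv₀ (by fun_prop) ?_) <;>
    rintro ⟨t, x⟩ ⟨ht, hx⟩
  · exact (add_pos ht one_pos).ne'
  · exact (add_pos ht (hs hx)).ne'

lemma exists_integrableOn_bound_inv_add_one_sub_inv_add {s : Set ℝ} (hs : IsCompact s)
    (hs0 : s ⊆ Ioi 0) :
    ∃ bound : ℝ → ℝ, IntegrableOn bound (Ioi 0) ∧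
      ∀ t ∈ Ioi 0, ∀ x ∈ s, ‖(t + 1)⁻¹ - (t + x)⁻¹‖ ≤ bound t := by
  obtain ⟨c, hc, hcs⟩ := hs.exists_forall_le' continuousOn_id hs0
  obtain ⟨C, hC⟩ := hs.exists_bound_of_continuousOn (f := fun x ↦ x - 1) (by fun_prop)
  have hd : 0 < min 1 c := lt_min one_pos hc
  refine ⟨fun t ↦ C * (t + min 1 c)⁻¹ ^ 2, (integrableOn_inv_add_pow hd le_rfl).const_mul C,
    fun t (ht : 0 < t) x hx ↦ ?_⟩
  refine (abs_inv_add_one_sub_inv_add_le (min_le_left _ _)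
    ((min_le_right _ _).trans (hcs x hx)) (by linarith)).trans ?_
  exact mul_le_mul_of_nonneg_right (hC x hx) (by positivity)

lemma integrableOn_inv_add_one_sub_inv_add (hx : 0 < x) :
    IntegrableOn (fun t : ℝ ↦ (t + 1)⁻¹ - (t + x)⁻¹) (Ioi 0) := by
  obtain ⟨bound, hbound, hle⟩ := exists_integrableOn_bound_inv_add_one_sub_inv_add
    (isCompact_singleton (x := x)) (singleton_subset_iff.2 hx)
  exact hbound.mono' (by fun_prop) <|
    ae_restrict_of_forall_mem measurableSet_Ioi fun t ht ↦ hle t ht x rfl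

lemma tendsto_log_add_one_sub_log_add (x : ℝ) :
    Tendsto (fun t ↦ Real.log (t + 1) - Real.log (t + x)) atTop (𝓝 0) := by
  simpa using (Real.tendsto_log_comp_add_sub_log 1).sub (Real.tendsto_log_comp_add_sub_log x)

lemma integral_inv_add_one_sub_inv_add (hx : 0 < x) :
    ∫ t in Ioi (0 : ℝ), ((t + 1)⁻¹ - (t + x)⁻¹) = Real.log x := by
  have hderiv : ∀ t ∈ Ici (0 : ℝ), HasDerivAt (fun t ↦ Real.log (t + 1) - Real.log (t + x))
      ((t + 1)⁻¹ - (t + x)⁻¹) t := fun t (ht : 0 ≤ t) ↦ by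
    have hlog {y : ℝ} (hy : 0 < y) : HasDerivAt (fun t ↦ Real.log (t + y)) (t + y)⁻¹ t := by
      simpa using ((hasDerivAt_id t).add_const y).log (add_pos_of_nonneg_of_pos ht hy).ne'
    exact (hlog one_pos).sub (hlog hx)
  simpa using integral_Ioi_of_hasDerivAt_of_tendsto' hderiv
    (integrableOn_inv_add_one_sub_inv_add hx) (tendsto_log_add_one_sub_log_add x)

end ScalarIntegral

/-- The resolvent `(t + a)⁻¹` of `a` at `-t`, with the sign that makes it positive for `0 < a`.
It is `0` when `t + a` is not invertible. -/
noncomputable def shiftedInverse {A : Type*} [Ring A] [Algebra ℝ A] (a : A) (t : ℝ) : A :=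
  Ring.inverse (algebraMap ℝ A t + a)

section SpectralLowerBound

variable {A : Type*} [Ring A] [Algebra ℝ A] {a b : A} {c t : ℝ}

lemma isUnit_algebraMap_add (ha : spectrum ℝ a ⊆ Ici c) (ht : -c < t) :
    IsUnit (algebraMap ℝ A t + a) := by
  have h : -t ∉ spectrum ℝ a := fun h ↦ by linarith [mem_Ici.1 (ha h)]
  rw [spectrum.notMem_iff, map_neg, ← neg_add', IsUnit.neg_iff] at h
  exact h

lemma shiftedInverse_sub_shiftedInverse (ha : IsUnit (algebraMap ℝ A t + a))
    (hb : IsUnit (algebraMap ℝ A t + b)) :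
    shiftedInverse a t - shiftedInverse b t =
      shiftedInverse a t * (b - a) * shiftedInverse b t := by
  rw [shiftedInverse, shiftedInverse, Ring.inverse_sub_inverse (iff_of_true ha hb),
    add_sub_add_left_eq_sub]

end SpectralLowerBound

lemma continuousOn_shiftedInverse {A : Type*} [NormedRing A] [NormedAlgebra ℝ A]
    [HasSummableGeomSeries A] {a : A} {s : Set ℝ} (ha : ∀ t ∈ s, IsUnit (algebraMap ℝ A t + a)) :
    ContinuousOn (shiftedInverse a) s := fun t ht ↦ by
  have hinv := NormedRing.inverse_continuousAt (ha t ht).unit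
  exact (hinv.comp (f := fun t ↦ algebraMap ℝ A t + a) (by fun_prop)).continuousWithinAt

section FunctionalCalculus

variable {A : Type*} [Ring A] [StarRing A] [TopologicalSpace A] [Algebra ℝ A]
  [ContinuousFunctionalCalculus ℝ A IsSelfAdjoint] {a : A}

lemma shiftedInverse_eq_cfc {c t : ℝ} (ha : IsSelfAdjoint a) (hca : spectrum ℝ a ⊆ Ici c)
    (ht : -c < t) : shiftedInverse a t = cfc (fun x ↦ (t + x)⁻¹) a := by
  rw [cfc_inv (fun x ↦ t + x) a fun x hx ↦ by linarith [mem_Ici.1 (hca hx)],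
    cfc_const_add t (fun x ↦ x) a, cfc_id' ℝ a, shiftedInverse]

lemma algebraMap_sub_shiftedInverse_eq_cfc (ha : IsSelfAdjoint a) (ha0 : spectrum ℝ a ⊆ Ioi 0)
    {t : ℝ} (ht : 0 < t) :
    algebraMap ℝ A (t + 1)⁻¹ - shiftedInverse a t = cfc (fun x ↦ (t + 1)⁻¹ - (t + x)⁻¹) a := by
  have hne : ∀ x ∈ spectrum ℝ a, t + x ≠ 0 := fun x hx ↦ (add_pos ht (ha0 hx)).ne'
  rw [cfc_sub (fun _ ↦ (t + 1)⁻¹) (fun x ↦ (t + x)⁻¹) a continuousOn_const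
      (.inv₀ (by fun_prop) hne), cfc_const _ a,
    shiftedInverse_eq_cfc ha (ha0.trans Ioi_subset_Ici_self) (by linarith)]

end FunctionalCalculus

section Logarithm

variable {A : Type*} [NormedRing A] [StarRing A] [NormedAlgebra ℝ A]
  [IsometricContinuousFunctionalCalculus ℝ A IsSelfAdjoint] {a b : A} {c : ℝ}

lemma norm_shiftedInverse_le (ha : IsSelfAdjoint a) (hca : spectrum ℝ a ⊆ Ici c) {t : ℝ}
    (ht : -c < t) : ‖shiftedInverse a t‖ ≤ (t + c)⁻¹ := by
  have htc : 0 < t + c := by linarith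
  rw [shiftedInverse_eq_cfc ha hca ht]
  refine norm_cfc_le (by positivity) fun x hx ↦ ?_
  have hcx : t + c ≤ t + x := by linarith [mem_Ici.1 (hca hx)]
  rw [norm_inv, Real.norm_of_nonneg (htc.le.trans hcx)]
  exact inv_anti₀ htc hcx

lemma norm_shiftedInverse_sub_sub_le (ha : IsSelfAdjoint a) (hb : IsSelfAdjoint b)
    (hca : spectrum ℝ a ⊆ Ici c) (hcb : spectrum ℝ b ⊆ Ici c) {t : ℝ} (ht : -c < t) :
    ‖shiftedInverse a t - shiftedInverse b t - shiftedInverse a t * (b - a) * shiftedInverse a t‖ ≤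
      ‖b - a‖ ^ 2 * (t + c)⁻¹ ^ 3 := by
  have hRa := norm_shiftedInverse_le ha hca ht
  have hRb := norm_shiftedInverse_le hb hcb ht
  have hresolvent := shiftedInverse_sub_shiftedInverse (isUnit_algebraMap_add hca ht)
    (isUnit_algebraMap_add hcb ht)
  calc ‖shiftedInverse a t - shiftedInverse b t -
        shiftedInverse a t * (b - a) * shiftedInverse a t‖
      = ‖shiftedInverse a t * (b - a) * (shiftedInverse a t - shiftedInverse b t)‖ := by
        rw [hresolvent, ← mul_sub, ← norm_neg, ← mul_neg, neg_sub, hresolvent]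
    _ = ‖shiftedInverse a t * (b - a) * (shiftedInverse a t * (b - a) * shiftedInverse b t)‖ := by
        rw [hresolvent]
    _ ≤ (t + c)⁻¹ * ‖b - a‖ * ((t + c)⁻¹ * ‖b - a‖ * (t + c)⁻¹) :=
        norm_mul_le_of_le (norm_mul_le_of_le hRa le_rfl)
          (norm_mul_le_of_le (norm_mul_le_of_le hRa le_rfl) hRb)
    _ = ‖b - a‖ ^ 2 * (t + c)⁻¹ ^ 3 := by ring

-- Below `c - ‖h‖` the element `a - x` is invertible with `‖(a - x)⁻¹‖ < ‖h‖⁻¹`, so a Neumann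
-- series inverts `a + h - x = (a - x) (1 + (a - x)⁻¹ h)`.
lemma spectrum_add_subset_Ici [HasSummableGeomSeries A] (ha : IsSelfAdjoint a)
    (hca : spectrum ℝ a ⊆ Ici c) (h : A) :
    spectrum ℝ (a + h) ⊆ Ici (c - ‖h‖) := by
  intro x hx
  by_contra hxc
  have hlt : ‖h‖ < -x + c := by linarith [not_le.1 (mt mem_Ici.2 hxc)]
  have hunit := isUnit_algebraMap_add (t := -x) hca (by linarith [norm_nonneg h])
  have hnorm : ‖-(shiftedInverse a (-x) * h)‖ < 1 :=
    calc ‖-(shiftedInverse a (-x) * h)‖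
        ≤ (-x + c)⁻¹ * ‖h‖ := by
          rw [norm_neg]
          exact norm_mul_le_of_le (norm_shiftedInverse_le ha hca (by linarith [norm_nonneg h]))
            le_rfl
      _ < 1 := by rwa [inv_mul_lt_one₀ ((norm_nonneg h).trans_lt hlt)]
  have hfactor : algebraMap ℝ A x - (a + h) =
      -((algebraMap ℝ A (-x) + a) * (1 - -(shiftedInverse a (-x) * h))) := by
    rw [sub_neg_eq_add, mul_add, mul_one, ← mul_assoc, shiftedInverse,
      Ring.mul_inverse_cancel _ hunit, one_mul, map_neg]
    abel
  refine hx (spectrum.mem_resolventSet_iff.2 ?_)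
  rw [hfactor]
  exact (hunit.mul (isUnit_one_sub_of_norm_lt_one hnorm)).neg

lemma integrableOn_shiftedInverse_mul_mul_shiftedInverse [HasSummableGeomSeries A]
    (ha : IsSelfAdjoint a) (hb : IsSelfAdjoint b) (hc : 0 < c) (hca : spectrum ℝ a ⊆ Ici c)
    (hcb : spectrum ℝ b ⊆ Ici c) (h : A) :
    IntegrableOn (fun t ↦ shiftedInverse a t * h * shiftedInverse b t) (Ioi 0) := by
  have hlt : ∀ t ∈ Ioi (0 : ℝ), -c < t := fun t (ht : 0 < t) ↦ by linarith
  have hcont {d : A} (hcd : spectrum ℝ d ⊆ Ici c) : ContinuousOn (shiftedInverse d) (Ioi 0) :=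
    continuousOn_shiftedInverse fun t ht ↦ isUnit_algebraMap_add hcd (hlt t ht)
  refine ((integrableOn_inv_add_pow hc le_rfl).const_mul ‖h‖).mono'
    ((((hcont hca).mul continuousOn_const).mul (hcont hcb)).aestronglyMeasurable
      measurableSet_Ioi)
    (ae_restrict_of_forall_mem measurableSet_Ioi fun t ht ↦ ?_)
  calc ‖shiftedInverse a t * h * shiftedInverse b t‖
      ≤ (t + c)⁻¹ * ‖h‖ * (t + c)⁻¹ :=
        norm_mul_le_of_le (norm_mul_le_of_le (norm_shiftedInverse_le ha hca (hlt t ht)) le_rfl)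
          (norm_shiftedInverse_le hb hcb (hlt t ht))
    _ = ‖h‖ * (t + c)⁻¹ ^ 2 := by ring

variable [CompleteSpace A]

lemma integrableOn_algebraMap_sub_shiftedInverse (ha : IsSelfAdjoint a)
    (ha0 : spectrum ℝ a ⊆ Ioi 0) :
    IntegrableOn (fun t ↦ algebraMap ℝ A (t + 1)⁻¹ - shiftedInverse a t) (Ioi 0) := by
  obtain ⟨bound, hbound, hle⟩ :=
    exists_integrableOn_bound_inv_add_one_sub_inv_add (spectrum.isCompact a) ha0
  refine (integrableOn_cfc measurableSet_Ioi _ bound a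
    (continuousOn_uncurry_inv_add_one_sub_inv_add ha0)
    (ae_restrict_of_forall_mem measurableSet_Ioi hle) hbound.2).congr_fun ?_ measurableSet_Ioi
  exact fun t ht ↦ (algebraMap_sub_shiftedInverse_eq_cfc ha ha0 ht).symm

lemma integral_algebraMap_sub_shiftedInverse (ha : IsSelfAdjoint a)
    (ha0 : spectrum ℝ a ⊆ Ioi 0) :
    ∫ t in Ioi 0, (algebraMap ℝ A (t + 1)⁻¹ - shiftedInverse a t) = CFC.log a := by
  obtain ⟨bound, hbound, hle⟩ :=
    exists_integrableOn_bound_inv_add_one_sub_inv_add (spectrum.isCompact a) ha0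
  calc ∫ t in Ioi 0, (algebraMap ℝ A (t + 1)⁻¹ - shiftedInverse a t)
      = ∫ t in Ioi 0, cfc (fun x ↦ (t + 1)⁻¹ - (t + x)⁻¹) a :=
        setIntegral_congr_fun measurableSet_Ioi fun t ht ↦
          algebraMap_sub_shiftedInverse_eq_cfc ha ha0 ht
    _ = cfc (fun x ↦ ∫ t in Ioi 0, ((t + 1)⁻¹ - (t + x)⁻¹)) a :=
        (cfc_setIntegral measurableSet_Ioi _ bound a
          (continuousOn_uncurry_inv_add_one_sub_inv_add ha0)
          (ae_restrict_of_forall_mem measurableSet_Ioi hle) hbound.2).symm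
    _ = CFC.log a := cfc_congr fun x hx ↦ integral_inv_add_one_sub_inv_add (ha0 hx)

lemma integrableOn_shiftedInverse_sub_shiftedInverse (ha : IsSelfAdjoint a)
    (ha0 : spectrum ℝ a ⊆ Ioi 0) (hb : IsSelfAdjoint b) (hb0 : spectrum ℝ b ⊆ Ioi 0) :
    IntegrableOn (fun t ↦ shiftedInverse a t - shiftedInverse b t) (Ioi 0) := by
  simpa [Pi.sub_def] using (integrableOn_algebraMap_sub_shiftedInverse hb hb0).sub
    (integrableOn_algebraMap_sub_shiftedInverse ha ha0)

lemma log_sub_log_eq_integral (ha : IsSelfAdjoint a)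
    (ha0 : spectrum ℝ a ⊆ Ioi 0) (hb : IsSelfAdjoint b) (hb0 : spectrum ℝ b ⊆ Ioi 0) :
    CFC.log b - CFC.log a = ∫ t in Ioi 0, (shiftedInverse a t - shiftedInverse b t) := by
  rw [← integral_algebraMap_sub_shiftedInverse ha ha0,
    ← integral_algebraMap_sub_shiftedInverse hb hb0,
    ← integral_sub (integrableOn_algebraMap_sub_shiftedInverse hb hb0)
      (integrableOn_algebraMap_sub_shiftedInverse ha ha0)]
  simp only [sub_sub_sub_cancel_left]

lemma norm_log_sub_log_sub_integral_le (ha : IsSelfAdjoint a) (hb : IsSelfAdjoint b) (hc : 0 < c)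
    (hca : spectrum ℝ a ⊆ Ici c) (hcb : spectrum ℝ b ⊆ Ici c) :
    ‖CFC.log b - CFC.log a -
        ∫ t in Ioi 0, shiftedInverse a t * (b - a) * shiftedInverse a t‖ ≤
      ‖b - a‖ ^ 2 * ∫ t in Ioi 0, (t + c)⁻¹ ^ 3 := by
  have hc0 : Ici c ⊆ Ioi 0 := Ici_subset_Ioi.2 hc
  rw [log_sub_log_eq_integral ha (hca.trans hc0) hb (hcb.trans hc0),
    ← integral_sub
      (integrableOn_shiftedInverse_sub_shiftedInverse ha (hca.trans hc0) hb (hcb.trans hc0))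
      (integrableOn_shiftedInverse_mul_mul_shiftedInverse ha ha hc hca hca _),
    ← integral_const_mul]
  exact norm_integral_le_of_norm_le ((integrableOn_inv_add_pow hc (by norm_num)).const_mul _) <|
    ae_restrict_of_forall_mem measurableSet_Ioi fun t (ht : 0 < t) ↦
      norm_shiftedInverse_sub_sub_le ha hb hca hcb (by linarith)

end Logarithm

theorem mlog_hasDerivAt_general {A : Type*} [NormedRing A] [StarRing A] [NormedAlgebra ℝ A]
    [IsometricContinuousFunctionalCalculus ℝ A IsSelfAdjoint] [StarModule ℝ A] [CompleteSpace A]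
    {a b : A} (ha : IsSelfAdjoint a) (ha0 : spectrum ℝ a ⊆ Ioi 0) (hb : IsSelfAdjoint b) :
    IntegrableOn (fun t ↦ shiftedInverse a t * b * shiftedInverse a t) (Ioi 0) ∧
      HasDerivAt (fun ε : ℝ ↦ CFC.log (a + ε • b))
        (∫ t in Ioi 0, shiftedInverse a t * b * shiftedInverse a t) 0 := by
  obtain ⟨c, hc, hca : spectrum ℝ a ⊆ Ici c⟩ :=
    (spectrum.isCompact a).exists_forall_le' continuousOn_id ha0
  refine ⟨integrableOn_shiftedInverse_mul_mul_shiftedInverse ha ha hc hca hca b, ?_⟩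
  have hsmall : ∀ᶠ ε : ℝ in 𝓝 0, ‖ε • b‖ < c / 2 :=
    (by fun_prop : Continuous fun ε : ℝ ↦ ‖ε • b‖).continuousAt.eventually_lt_const
      (by simpa using hc)
  have hremainder : ∀ᶠ ε : ℝ in 𝓝 0,
      ‖CFC.log (a + ε • b) - CFC.log a -
          ε • ∫ t in Ioi 0, shiftedInverse a t * b * shiftedInverse a t‖ ≤
        (‖b‖ ^ 2 * ∫ t in Ioi 0, (t + c / 2)⁻¹ ^ 3) * ‖ε ^ 2‖ := by
    filter_upwards [hsmall] with ε hε
    have hcε : spectrum ℝ (a + ε • b) ⊆ Ici (c / 2) :=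
      (spectrum_add_subset_Ici ha hca (ε • b)).trans (Ici_subset_Ici.2 (by linarith))
    have htaylor := norm_log_sub_log_sub_integral_le ha (ha.add ((IsSelfAdjoint.all ε).smul hb))
      (half_pos hc) (hca.trans (Ici_subset_Ici.2 (half_le_self hc.le))) hcε
    simp only [add_sub_cancel_left, mul_smul_comm, smul_mul_assoc, integral_smul, norm_smul,
      mul_pow] at htaylor
    rw [norm_pow]
    linarith
  refine .of_isLittleO ?_
  simpa using (Asymptotics.IsBigO.of_bound _ hremainder).trans_isLittleO
    (Asymptotics.isLittleO_pow_id one_lt_two)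

section Matrix

open scoped Matrix.Norms.L2Operator

variable {m n : Type*} [Fintype m] [Fintype n] [DecidableEq n]

lemma shiftedInverse_eq_inv (X : Matrix n n ℂ) (t : ℝ) :
    shiftedInverse X t = ((t : ℂ) • 1 + X)⁻¹ := by
  rw [shiftedInverse, Matrix.nonsing_inv_eq_ringInverse, Algebra.algebraMap_eq_smul_one,
    Complex.coe_smul]

lemma spectrum_subset_Ioi_of_posDef {𝕜 : Type*} [RCLike 𝕜] {ρ : Matrix n n 𝕜}
    (hρ : ρ.PosDef) : spectrum ℝ ρ ⊆ Ioi 0 := by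
  rw [hρ.isHermitian.spectrum_real_eq_range_eigenvalues]
  exact range_subset_iff.2 hρ.eigenvalues_pos

lemma mlog_eq_log {n : ℕ} (X : Matrix (Fin n) (Fin n) ℂ) : mlog X = CFC.log X := by
  by_cases hX : X.IsHermitian
  · rw [mlog, dif_pos hX, CFC.log, hX.cfc_eq, Matrix.IsHermitian.cfc,
      Unitary.conjStarAlgAut_apply]
    rfl
  · rw [mlog, dif_neg hX, CFC.log]
    exact (cfc_apply_of_not_predicate X hX).symm

variable {α : Type*} [MeasurableSpace α] {μ : Measure α}

lemma integrable_matrix_entry {f : α → Matrix m n ℂ} (hf : Integrable f μ)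
    (i : m) (j : n) : Integrable (fun x ↦ f x i j) μ :=
  (Matrix.entryLinearMap ℝ ℂ i j).toContinuousLinearMap.integrable_comp hf

lemma integral_matrix_entry {f : α → Matrix m n ℂ} (hf : Integrable f μ)
    (i : m) (j : n) : ∫ x, f x i j ∂μ = (∫ x, f x ∂μ) i j :=
  (Matrix.entryLinearMap ℝ ℂ i j).toContinuousLinearMap.integral_comp_comm hf

end Matrix

/-- **Derivative of the matrix logarithm.**
For `ρ` positive definite and `A` Hermitian, the map `ε ↦ log(ρ + ε·A)` is differentiable
at `ε = 0` with derivative `∫₀^∞ (t·I + ρ)⁻¹ A (t·I + ρ)⁻¹ dt`, a convergent improper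
Bochner integral (stated entrywise). -/
theorem mlog_hasDerivAt
    (n : ℕ) (hn : 1 ≤ n) (ρ : Matrix (Fin n) (Fin n) ℂ) (hρ : ρ.PosDef)
    (A : Matrix (Fin n) (Fin n) ℂ) (hA : A.IsHermitian) :
    (∀ i j, MeasureTheory.IntegrableOn
      (fun t : ℝ =>
        (((t : ℂ) • (1 : Matrix (Fin n) (Fin n) ℂ) + ρ)⁻¹ * A * ((t : ℂ) • 1 + ρ)⁻¹) i j)
      (Set.Ioi 0)) ∧
    (∀ i j, HasDerivAt (fun ε : ℝ => mlog (ρ + ε • A) i j)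
      (∫ t in Set.Ioi (0:ℝ),
        (((t : ℂ) • (1 : Matrix (Fin n) (Fin n) ℂ) + ρ)⁻¹ * A * ((t : ℂ) • 1 + ρ)⁻¹) i j)
      0) := by
  open scoped Matrix.Norms.L2Operator in
  obtain ⟨hint, hderiv⟩ := mlog_hasDerivAt_general (A := Matrix (Fin n) (Fin n) ℂ)
    hρ.isHermitian (spectrum_subset_Ioi_of_posDef hρ) hA
  simp only [shiftedInverse_eq_inv, ← mlog_eq_log] at hint hderiv
  refine ⟨integrable_matrix_entry hint, fun i j ↦ ?_⟩
  rw [integral_matrix_entry hint]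
  -- `HasDerivAt` depends only on the topology, which for the operator norm is that of the entries.
  exact hasDerivAt_pi.1 (hasDerivAt_pi.1 hderiv i) j
end

section
/- Let n ≥ 1, let σ, ρ ∈ Matrix (Fin n) (Fin n) ℂ be positive definite with Tr σ = 1 and Tr ρ = 1, and let A ∈ Matrix (Fin n) (Fin n) ℂ be Hermitian with Tr A = 0. Define H_σ(τ) := Re Tr[τ·(log τ − log σ)] for positive definite τ with Tr τ = 1. Then the map ε ↦ H_σ(ρ + ε·A) (defined for all sufficiently small real ε) is differentiable at ε = 0 with derivative Re Tr[(log ρ − log σ)·A]. -/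
open scoped ComplexOrder Matrix

/-- The von Neumann relative entropy `H_σ(τ) := Re Tr[τ (log τ − log σ)]`. -/
noncomputable def vonNeumannRelEnt {n : ℕ} (σ τ : Matrix (Fin n) (Fin n) ℂ) : ℝ :=
  ((τ * (mlog τ - mlog σ)).trace).re

/-! Among Hermitian matrices, `X ↦ Tr f(X)` has derivative `M ↦ Tr (f'(Y) M)` at `Y`, even though
`X` and `Y` need not commute. Indeed, in eigenbases `u` of `X` and `v` of `Y`, the remainder
`Tr (f(X) - f(Y) - f'(Y) (X - Y))` and the squared distance `Tr (X - Y)²` are the sums of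
`f(x) - f(y) - f'(y) (x - y)` and of `(x - y)²` over pairs of eigenvalues `x` of `X` and `y` of `Y`,
with the same weights `|⟨u, v⟩|²`. For `X` near `Y` the scalar remainder is at most
`η |x - y| + K (x - y)²` with `η` arbitrarily small, and Cauchy–Schwarz concludes.

The relative entropy of `τ` is `Tr f(τ)` with `f(x) = x log x`, minus the linear term
`Tr (τ log σ)`; the constant in `f'(x) = log x + 1` contributes `Tr A = 0`. -/

open Filter Topology

section SpectralOverlap

variable {n 𝕜 : Type*} [Fintype n] [DecidableEq n] [RCLike 𝕜] {X Y : Matrix n n 𝕜}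

/-- The Nussbaum–Szkoła weights `|⟨uᵢ, vⱼ⟩|²` of eigenbases `u` of `X` and `v` of `Y`. They turn
traces of products `f(X) g(Y)` into sums over pairs of eigenvalues. -/
noncomputable def spectralOverlap (hX : X.IsHermitian) (hY : Y.IsHermitian) (i j : n) : ℝ :=
  RCLike.normSq ((star (hX.eigenvectorUnitary : Matrix n n 𝕜) * hY.eigenvectorUnitary) i j)

lemma spectralOverlap_nonneg (hX : X.IsHermitian) (hY : Y.IsHermitian) (i j : n) :
    0 ≤ spectralOverlap hX hY i j :=
  RCLike.normSq_nonneg _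

theorem re_trace_cfc_mul_cfc (hX : X.IsHermitian) (hY : Y.IsHermitian) (f g : ℝ → ℝ) :
    RCLike.re (cfc f X * cfc g Y).trace =
      ∑ i, ∑ j, spectralOverlap hX hY i j * (f (hX.eigenvalues i) * g (hY.eigenvalues j)) := by
  let U : Matrix n n 𝕜 := hX.eigenvectorUnitary
  let V : Matrix n n 𝕜 := hY.eigenvectorUnitary
  let D (φ : n → ℝ) : Matrix n n 𝕜 := Matrix.diagonal (RCLike.ofReal ∘ φ)
  have hcycle : (cfc f X * cfc g Y).trace =
      (D (f ∘ hX.eigenvalues) * (star U * V) *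
        (D (g ∘ hY.eigenvalues) * star (star U * V))).trace := by
    rw [hX.cfc_eq, hY.cfc_eq, Matrix.IsHermitian.cfc, Matrix.IsHermitian.cfc,
      Unitary.conjStarAlgAut_apply, Unitary.conjStarAlgAut_apply, star_mul, star_star,
      mul_assoc, mul_assoc, Matrix.trace_mul_comm]
    simp only [mul_assoc, U, V, D]
  rw [hcycle, Matrix.trace, map_sum]
  refine Finset.sum_congr rfl fun i _ => ?_
  rw [Matrix.diag_apply, Matrix.mul_apply, map_sum]
  refine Finset.sum_congr rfl fun j _ => ?_
  rw [Matrix.diagonal_mul, Matrix.diagonal_mul, Matrix.star_apply, spectralOverlap,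
    RCLike.normSq_apply]
  simp only [Function.comp_apply, RCLike.star_def, RCLike.mul_re, RCLike.mul_im, RCLike.ofReal_re,
    RCLike.ofReal_im, RCLike.conj_re, RCLike.conj_im, zero_mul, sub_zero, add_zero, mul_neg,
    sub_neg_eq_add]
  ring

theorem sum_spectralOverlap (hX : X.IsHermitian) (hY : Y.IsHermitian) :
    ∑ i, ∑ j, spectralOverlap hX hY i j = Fintype.card n := by
  simpa [cfc_const_one ℝ X hX.isSelfAdjoint, cfc_const_one ℝ Y hY.isSelfAdjoint]
    using (re_trace_cfc_mul_cfc hX hY (fun _ => 1) (fun _ => 1)).symm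

theorem re_trace_cfc_eq_sum_left (hX : X.IsHermitian) (hY : Y.IsHermitian) (f : ℝ → ℝ) :
    RCLike.re (cfc f X).trace =
      ∑ i, ∑ j, spectralOverlap hX hY i j * f (hX.eigenvalues i) := by
  simpa [cfc_const_one ℝ Y hY.isSelfAdjoint] using re_trace_cfc_mul_cfc hX hY f (fun _ => 1)

theorem re_trace_cfc_eq_sum_right (hX : X.IsHermitian) (hY : Y.IsHermitian) (g : ℝ → ℝ) :
    RCLike.re (cfc g Y).trace =
      ∑ i, ∑ j, spectralOverlap hX hY i j * g (hY.eigenvalues j) := by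
  simpa [cfc_const_one ℝ X hX.isSelfAdjoint] using re_trace_cfc_mul_cfc hX hY (fun _ => 1) g

theorem re_trace_cfc_mul_sub (hX : X.IsHermitian) (hY : Y.IsHermitian) (g : ℝ → ℝ) :
    RCLike.re (cfc g Y * (X - Y)).trace = ∑ i, ∑ j, spectralOverlap hX hY i j *
      (g (hY.eigenvalues j) * (hX.eigenvalues i - hY.eigenvalues j)) := by
  have hgX : RCLike.re (cfc g Y * X).trace = ∑ i, ∑ j, spectralOverlap hX hY i j *
      (hX.eigenvalues i * g (hY.eigenvalues j)) := by
    simpa [cfc_id' ℝ X hX.isSelfAdjoint, Matrix.trace_mul_comm X]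
      using re_trace_cfc_mul_cfc hX hY (fun x => x) g
  have hgY : RCLike.re (cfc g Y * Y).trace = ∑ i, ∑ j, spectralOverlap hX hY i j *
      (g (hY.eigenvalues j) * hY.eigenvalues j) := by
    rw [← re_trace_cfc_eq_sum_right hX hY (fun y => g y * y),
      cfc_mul g (fun y => y) Y (Y.finite_real_spectrum.continuousOn g),
      cfc_id' ℝ Y hY.isSelfAdjoint]
  rw [mul_sub, Matrix.trace_sub, map_sub, hgX, hgY]
  simp only [← Finset.sum_sub_distrib]
  exact Finset.sum_congr rfl fun i _ => Finset.sum_congr rfl fun j _ => by ring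

theorem re_trace_sub_mul_sub (hX : X.IsHermitian) (hY : Y.IsHermitian) :
    RCLike.re ((X - Y) * (X - Y)).trace = ∑ i, ∑ j, spectralOverlap hX hY i j *
      (hX.eigenvalues i - hY.eigenvalues j) ^ 2 := by
  have hXX : RCLike.re (X * X).trace = ∑ i, ∑ j, spectralOverlap hX hY i j *
      (hX.eigenvalues i * hX.eigenvalues i) := by
    rw [← re_trace_cfc_eq_sum_left hX hY (fun x => x * x), cfc_mul (fun x => x) (fun x => x) X,
      cfc_id' ℝ X hX.isSelfAdjoint]
  have hYX : RCLike.re (Y * (X - Y)).trace = ∑ i, ∑ j, spectralOverlap hX hY i j *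
      (hY.eigenvalues j * (hX.eigenvalues i - hY.eigenvalues j)) := by
    simpa only [cfc_id' ℝ Y hY.isSelfAdjoint] using re_trace_cfc_mul_sub hX hY (fun y => y)
  have hXY : RCLike.re (X * Y).trace = ∑ i, ∑ j, spectralOverlap hX hY i j *
      (hX.eigenvalues i * hY.eigenvalues j) := by
    simpa only [cfc_id' ℝ X hX.isSelfAdjoint, cfc_id' ℝ Y hY.isSelfAdjoint]
      using re_trace_cfc_mul_cfc hX hY (fun x => x) (fun y => y)
  rw [sub_mul, mul_sub X, Matrix.trace_sub, Matrix.trace_sub, map_sub, map_sub, hXX, hXY, hYX]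
  simp only [← Finset.sum_sub_distrib]
  exact Finset.sum_congr rfl fun i _ => Finset.sum_congr rfl fun j _ => by ring

theorem sum_spectralOverlap_mul_abs_sub_le (hX : X.IsHermitian) (hY : Y.IsHermitian) :
    ∑ i, ∑ j, spectralOverlap hX hY i j * |hX.eigenvalues i - hY.eigenvalues j| ≤
      √(Fintype.card n) * √(RCLike.re ((X - Y) * (X - Y)).trace) := by
  let x := hX.eigenvalues
  let y := hY.eigenvalues
  let r (p : n × n) : ℝ := √(spectralOverlap hX hY p.1 p.2)
  have hr (p : n × n) : r p * r p = spectralOverlap hX hY p.1 p.2 :=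
    Real.mul_self_sqrt (spectralOverlap_nonneg hX hY p.1 p.2)
  rw [← sum_spectralOverlap hX hY, re_trace_sub_mul_sub hX hY]
  simp only [← Fintype.sum_prod_type', ← hr]
  simpa only [mul_pow, sq_abs, sq (r _), mul_assoc] using
    Real.sum_mul_le_sqrt_mul_sqrt Finset.univ r fun p => r p * |x p.1 - y p.2|

theorem abs_re_trace_cfc_sub_taylor_le (hX : X.IsHermitian) (hY : Y.IsHermitian)
    {f f' : ℝ → ℝ} {η K : ℝ} (hη : 0 ≤ η)
    (h : ∀ x ∈ spectrum ℝ X, ∀ y ∈ spectrum ℝ Y,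
      |f x - f y - f' y * (x - y)| ≤ η * |x - y| + K * (x - y) ^ 2) :
    |RCLike.re (cfc f X).trace - RCLike.re (cfc f Y).trace
        - RCLike.re (cfc f' Y * (X - Y)).trace| ≤
      η * (√(Fintype.card n) * √(RCLike.re ((X - Y) * (X - Y)).trace))
        + K * RCLike.re ((X - Y) * (X - Y)).trace := by
  let x := hX.eigenvalues
  let y := hY.eigenvalues
  let w := spectralOverlap hX hY
  calc _ = |∑ i, ∑ j, w i j * (f (x i) - f (y j) - f' (y j) * (x i - y j))| := by
        rw [re_trace_cfc_eq_sum_left hX hY, re_trace_cfc_eq_sum_right hX hY,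
          re_trace_cfc_mul_sub hX hY]
        simp only [mul_sub _ _ (f' _ * _), mul_sub _ (f _), Finset.sum_sub_distrib, w, x, y]
    _ ≤ ∑ i, ∑ j, |w i j * (f (x i) - f (y j) - f' (y j) * (x i - y j))| :=
        (Finset.abs_sum_le_sum_abs _ _).trans
          (Finset.sum_le_sum fun i _ => Finset.abs_sum_le_sum_abs _ _)
    _ ≤ ∑ i, ∑ j, w i j * (η * |x i - y j| + K * (x i - y j) ^ 2) := by
        refine Finset.sum_le_sum fun i _ => Finset.sum_le_sum fun j _ => ?_
        have hw : 0 ≤ w i j := spectralOverlap_nonneg hX hY i j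
        rw [abs_mul, abs_of_nonneg hw]
        gcongr
        exact h _ (hX.eigenvalues_mem_spectrum_real i) _ (hY.eigenvalues_mem_spectrum_real j)
    _ = η * ∑ i, ∑ j, w i j * |x i - y j| + K * ∑ i, ∑ j, w i j * (x i - y j) ^ 2 := by
        simp only [mul_add, Finset.sum_add_distrib, Finset.mul_sum, mul_left_comm]
    _ ≤ _ := by
        rw [re_trace_sub_mul_sub hX hY]
        gcongr
        simpa only [re_trace_sub_mul_sub hX hY] using sum_spectralOverlap_mul_abs_sub_le hX hY

end SpectralOverlap

theorem exists_eventually_nhdsSet_abs_sub_taylor_le {S : Set ℝ} (hS : S.Finite) {f f' : ℝ → ℝ}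
    (hf : ∀ y ∈ S, HasDerivAt f (f' y) y) {η : ℝ} (hη : 0 < η) :
    ∃ K, ∀ᶠ x in 𝓝ˢ S, ∀ y ∈ S,
      |f x - f y - f' y * (x - y)| ≤ η * |x - y| + K * (x - y) ^ 2 := by
  simp only [eventually_nhdsSet_iff_forall, eventually_all_finite hS]
  refine ((eventually_all_finite hS).2 fun y hy =>
    (eventually_all_finite hS).2 fun x₀ hx₀ => ?_).exists (f := atTop)
  obtain rfl | hne := eq_or_ne x₀ y
  · filter_upwards [eventually_ge_atTop 0] with K hK
    filter_upwards [(hasDerivAt_iff_isLittleO.1 (hf x₀ hx₀)).bound hη] with x hx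
    rw [smul_eq_mul, mul_comm (x - x₀), Real.norm_eq_abs, Real.norm_eq_abs] at hx
    exact hx.trans (le_add_of_nonneg_right (by positivity))
  · -- Away from `y`, the quadratic term alone dominates the bounded remainder.
    have hcont : ContinuousAt (fun x => |f x - f y - f' y * (x - y)| / (x - y) ^ 2) x₀ := by
      have := (hf x₀ hx₀).continuousAt
      have : (x₀ - y) ^ 2 ≠ 0 := pow_ne_zero 2 (sub_ne_zero.2 hne)
      fun_prop (disch := assumption)
    filter_upwards [eventually_gt_atTop (|f x₀ - f y - f' y * (x₀ - y)| / (x₀ - y) ^ 2)] with K hK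
    filter_upwards [hcont.eventually_lt_const hK, eventually_ne_nhds hne] with x hx hxy
    have hpos : 0 < (x - y) ^ 2 := by have := sub_ne_zero.2 hxy; positivity
    exact ((div_lt_iff₀ hpos).1 hx).le.trans (le_add_of_nonneg_left (by positivity))

section TraceFunction

variable {n 𝕜 : Type*} [Fintype n] [RCLike 𝕜]

/-- The continuous real-linear functional `X ↦ Re Tr (B X)`, used to state Fréchet derivatives of
real functions of a matrix. -/
noncomputable def reTraceMul (B : Matrix n n 𝕜) : Matrix n n 𝕜 →L[ℝ] ℝ :=
  RCLike.reCLM ∘L (Matrix.traceLinearMap n ℝ 𝕜 ∘ₗ LinearMap.mulLeft ℝ B).toContinuousLinearMap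

lemma reTraceMul_apply (B X : Matrix n n 𝕜) : reTraceMul B X = RCLike.re (B * X).trace := rfl

-- Differentiability does not depend on the norm, so any of Mathlib's matrix norms serves here.
open scoped Matrix.Norms.Operator

variable [DecidableEq n]

theorem isBigO_sqrt_re_trace_sub_mul_sub (Y : Matrix n n 𝕜) (l : Filter (Matrix n n 𝕜)) :
    (fun X => √(RCLike.re ((X - Y) * (X - Y)).trace)) =O[l] fun X => X - Y := by
  obtain ⟨C, hC, hbound⟩ := (reTraceMul (1 : Matrix n n 𝕜)).bound
  refine .of_bound √C (.of_forall fun X => ?_)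
  rw [Real.norm_of_nonneg (Real.sqrt_nonneg _), ← Real.sqrt_sq (norm_nonneg (X - Y)),
    ← Real.sqrt_mul hC.le]
  gcongr
  calc _ = reTraceMul 1 ((X - Y) * (X - Y)) := by rw [reTraceMul_apply, one_mul]
    _ ≤ C * ‖(X - Y) * (X - Y)‖ := (le_abs_self _).trans (hbound _)
    _ ≤ C * ‖X - Y‖ ^ 2 := by gcongr; simpa only [sq] using norm_mul_le (X - Y) (X - Y)

theorem isLittleO_re_trace_cfc_sub_taylor {Y : Matrix n n 𝕜} (hY : Y.IsHermitian) {f f' : ℝ → ℝ}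
    (hf : ∀ y ∈ spectrum ℝ Y, HasDerivAt f (f' y) y) :
    (fun X => RCLike.re (cfc f X).trace - RCLike.re (cfc f Y).trace
        - RCLike.re (cfc f' Y * (X - Y)).trace)
      =o[𝓝[{X | X.IsHermitian}] Y] fun X => √(RCLike.re ((X - Y) * (X - Y)).trace) := by
  set d : Matrix n n 𝕜 → ℝ := fun X => √(RCLike.re ((X - Y) * (X - Y)).trace)
  refine Asymptotics.isLittleO_iff.2 fun c hc => ?_
  obtain ⟨η, hη, hηc⟩ := exists_pos_mul_lt hc √(Fintype.card n)
  obtain ⟨K, hfK⟩ := exists_eventually_nhdsSet_abs_sub_taylor_le Y.finite_real_spectrum hf hη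
  have hspec : ∀ᶠ X in 𝓝 Y, ∀ᶠ x in 𝓝ˢ (spectrum ℝ X), ∀ y ∈ spectrum ℝ Y,
      |f x - f y - f' y * (x - y)| ≤ η * |x - y| + K * (x - y) ^ 2 :=
    upperHemicontinuous_spectrum ℝ _ Y _ hfK
  have hd : ContinuousAt (fun X => √(Fintype.card n) * η + K * d X) Y := by fun_prop
  have hdc : ∀ᶠ X in 𝓝 Y, √(Fintype.card n) * η + K * d X < c :=
    hd.eventually_lt_const (by simpa [d] using hηc)
  filter_upwards [self_mem_nhdsWithin, hspec.filter_mono nhdsWithin_le_nhds,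
    hdc.filter_mono nhdsWithin_le_nhds] with X hX hXspec hXc
  have hd_sq : RCLike.re ((X - Y) * (X - Y)).trace = d X ^ 2 := by
    refine (Real.sq_sqrt ?_).symm
    rw [re_trace_sub_mul_sub hX hY]
    exact Finset.sum_nonneg fun i _ => Finset.sum_nonneg fun j _ =>
      mul_nonneg (spectralOverlap_nonneg hX hY i j) (sq_nonneg _)
  calc _ ≤ η * (√(Fintype.card n) * d X) + K * d X ^ 2 := by
        rw [← hd_sq]
        exact abs_re_trace_cfc_sub_taylor_le hX hY hη.le hXspec.self_of_nhdsSet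
    _ = (√(Fintype.card n) * η + K * d X) * d X := by ring
    _ ≤ c * ‖d X‖ := by
        rw [Real.norm_of_nonneg (Real.sqrt_nonneg _)]
        gcongr

theorem hasFDerivWithinAt_re_trace_cfc {Y : Matrix n n 𝕜} (hY : Y.IsHermitian) {f f' : ℝ → ℝ}
    (hf : ∀ y ∈ spectrum ℝ Y, HasDerivAt f (f' y) y) :
    HasFDerivWithinAt (fun X => RCLike.re (cfc f X).trace) (reTraceMul (cfc f' Y))
      {X | X.IsHermitian} Y :=
  .of_isLittleO <|
    (isLittleO_re_trace_cfc_sub_taylor hY hf).trans_isBigO (isBigO_sqrt_re_trace_sub_mul_sub Y _)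

theorem hasFDerivWithinAt_re_trace_mul_cfc_log {ρ : Matrix n n 𝕜} (hρ : ρ.PosDef) :
    HasFDerivWithinAt (fun τ => RCLike.re (τ * cfc Real.log τ).trace)
      (reTraceMul (cfc Real.log ρ + 1)) {τ | τ.IsHermitian} ρ := by
  have hpos : ∀ y ∈ spectrum ℝ ρ, y ≠ 0 := by
    rw [hρ.isHermitian.spectrum_real_eq_range_eigenvalues, Set.forall_mem_range]
    exact fun i => (hρ.eigenvalues_pos i).ne'
  have hlog : cfc (fun y => Real.log y + 1) ρ = cfc Real.log ρ + 1 := by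
    rw [cfc_add_const 1 Real.log ρ (ρ.finite_real_spectrum.continuousOn _)
      hρ.isHermitian.isSelfAdjoint, map_one]
  have hmul : ∀ τ : Matrix n n 𝕜, τ.IsHermitian →
      τ * cfc Real.log τ = cfc (fun x => x * Real.log x) τ := fun τ hτ => by
    rw [cfc_mul (fun x => x) Real.log τ continuousOn_id (τ.finite_real_spectrum.continuousOn _),
      cfc_id' ℝ τ hτ.isSelfAdjoint]
  rw [← hlog]
  exact (hasFDerivWithinAt_re_trace_cfc hρ.isHermitian fun y hy =>
    Real.hasDerivAt_mul_log (hpos y hy)).congr (fun τ hτ => by rw [hmul τ hτ])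
      (by rw [hmul ρ hρ.isHermitian])

end TraceFunction

open scoped Matrix.Norms.Operator in
theorem hasDerivAt_add_smul_of_hasFDerivWithinAt_isHermitian
    {n 𝕜 E : Type*} [Finite n] [RCLike 𝕜] [NormedAddCommGroup E] [NormedSpace ℝ E]
    {F : Matrix n n 𝕜 → E} {F' : Matrix n n 𝕜 →L[ℝ] E}
    {X A : Matrix n n 𝕜} (hX : X.IsHermitian) (hA : A.IsHermitian)
    (hF : HasFDerivWithinAt F F' {Y | Y.IsHermitian} X) :
    HasDerivAt (fun ε : ℝ => F (X + ε • A)) (F' A) 0 := by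
  have := Fintype.ofFinite n
  have hline : (fun ε : ℝ => X + ε • A) ⁻¹' {Y | Y.IsHermitian} = Set.univ :=
    Set.eq_univ_of_forall fun ε => hX.add (hA.smul (IsSelfAdjoint.all ε))
  exact hasDerivWithinAt_univ.1 (hline ▸ hF.hasLineDerivWithinAt A)

theorem mlog_eq_cfc_log {n : ℕ} {τ : Matrix (Fin n) (Fin n) ℂ} (hτ : τ.IsHermitian) :
    mlog τ = cfc Real.log τ := by
  rw [mlog, dif_pos hτ, hτ.cfc_eq, Matrix.IsHermitian.cfc, Unitary.conjStarAlgAut_apply]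
  rfl

open scoped Matrix.Norms.Operator in
theorem relEnt_hasDerivAt_general {n : ℕ} {σ ρ : Matrix (Fin n) (Fin n) ℂ}
    (_hσ : σ.PosDef) (hρ : ρ.PosDef) :
    HasFDerivWithinAt (vonNeumannRelEnt σ) (reTraceMul (mlog ρ - mlog σ + 1))
      {τ | τ.IsHermitian} ρ := by
  have hsplit : ∀ τ : Matrix (Fin n) (Fin n) ℂ, τ.IsHermitian → vonNeumannRelEnt σ τ =
      RCLike.re (τ * cfc Real.log τ).trace - reTraceMul (mlog σ) τ := fun τ hτ => by
    rw [vonNeumannRelEnt, mlog_eq_cfc_log hτ, mul_sub, Matrix.trace_sub, Complex.sub_re,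
      Matrix.trace_mul_comm τ (mlog σ)]
    rfl
  have hderiv : reTraceMul (mlog ρ - mlog σ + 1) =
      reTraceMul (cfc Real.log ρ + 1) - reTraceMul (mlog σ) := by
    ext B
    simp only [mlog_eq_cfc_log hρ.isHermitian, reTraceMul_apply, sub_apply,
      add_mul, sub_mul, Matrix.trace_add, Matrix.trace_sub, map_add, map_sub]
    ring
  rw [hderiv]
  exact ((hasFDerivWithinAt_re_trace_mul_cfc_log hρ).sub
    (reTraceMul (mlog σ)).hasFDerivWithinAt).congr hsplit (hsplit ρ hρ.isHermitian)

/-- **Derivative of the von Neumann relative entropy.**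
For positive definite states `σ, ρ` of trace one and traceless Hermitian `A`, the map
`ε ↦ H_σ(ρ + ε·A)` is differentiable at `ε = 0` with derivative
`Re Tr[(log ρ − log σ) A]`. -/
theorem relEnt_hasDerivAt
    (n : ℕ) (hn : 1 ≤ n)
    (σ ρ : Matrix (Fin n) (Fin n) ℂ) (hσ : σ.PosDef) (hρ : ρ.PosDef)
    (hσtr : σ.trace = 1) (hρtr : ρ.trace = 1)
    (A : Matrix (Fin n) (Fin n) ℂ) (hA : A.IsHermitian) (hAtr : A.trace = 0) :
    HasDerivAt (fun ε : ℝ => vonNeumannRelEnt σ (ρ + ε • A))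
      (((mlog ρ - mlog σ) * A).trace.re) 0 := by
  simpa [reTraceMul_apply, add_mul, hAtr] using
    hasDerivAt_add_smul_of_hasFDerivWithinAt_isHermitian hρ.isHermitian hA
      (relEnt_hasDerivAt_general hσ hρ)
end
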